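/- arXiv:1709.09852 — 6 statements merged into one kernel-verified Lean document; each statement's English description precedes it below -/
import Mathlib

section
/- Let q1 > 0, C > 0, g > 0, 0 ≤ t < 1, and s ≥ 0. Define the feasible set F = { a ∈ [0, q1] : (1 − t)·g·(q1 − a) ≤ s } and the objective J(a) = (1 − t)(a + C)(q1 − a)g − C·s. Define a^D(t,s,g) = q1 − s/((1 − t)g) if 0 ≤ s ≤ (1 − t)·g·min(q1, (q1 + C)/2), and a^D(t,s,g) = max(0, q1 − C)/2 otherwise. Then a^D(t,s,g) ∈ F and J(a) ≤ J(a^D(t,s,g)) for all a ∈ F; that is, a^D(t,s,g) maximizes J over F. -/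
/-!
As a function of the price, the profit is a downward parabola with vertex `(q - C) / 2`, and the
feasible prices form the interval from `max 0 (q - s / ((1 - t) * g))` to `q`. The optimal price is
therefore the feasible price nearest to the vertex; since the vertex lies below `q`, this is the
maximum of the vertex and the left endpoint. The two cases in the definition of `a^D` record whether
the stock constraint `q - s / ((1 - t) * g) ≤ a` determines that maximum.
-/

open Set

theorem isMaxOn_Ici_max_of_monotoneOn_of_antitoneOn {α β : Type*} [LinearOrder α] [Preorder β]
    {f : α → β} {p : α} (hmono : MonotoneOn f (Iic p)) (hanti : AntitoneOn f (Ici p)) (l : α) :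
    IsMaxOn f (Ici l) (max l p) := by
  intro a (hla : l ≤ a)
  rcases le_total a p with hap | hpa
  · have hmax : max l p = p := max_eq_right (hla.trans hap)
    simpa only [mem_ofPred_eq, hmax] using hmono hap self_mem_Iic hap
  · exact hanti (le_max_right l p) hpa (max_le hla hpa)

namespace LinearPricing

/-- The profit at the constant price `a`: the revenue `(1 - t) * a * (q - a) * g` less the cost `C`
for each of the `s - (1 - t) * (q - a) * g` units left unsold, with the terms in `q - a`
collected. -/
def profit {R : Type*} [CommRing R] (q C t g s a : R) : R :=
  (1 - t) * (a + C) * (q - a) * g - C * s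

theorem profit_sub_profit {R : Type*} [CommRing R] (q C t g s a b : R) :
    profit q C t g s b - profit q C t g s a = (1 - t) * g * ((b - a) * (q - C - (a + b))) := by
  simp only [profit]
  ring

variable {K : Type*} [Field K] [LinearOrder K]

/-- The prices in `[0, q]` at which the sales `(1 - t) * g * (q - a)` over the remaining time do not
exceed the stock `s`. -/
def feasiblePrices (q t g s : K) : Set K :=
  {a | a ∈ Icc 0 q ∧ (1 - t) * g * (q - a) ≤ s}

/-- The deterministic pricing function `a^D(t, s, g)` for the linear demand `q - a`. -/
def optimalPrice (q C t g s : K) : K :=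
  if s ≤ (1 - t) * g * min q ((q + C) / 2) then q - s / ((1 - t) * g) else max 0 (q - C) / 2

variable [IsStrictOrderedRing K] {q C t g s : K}

theorem monotoneOn_profit (hm : 0 ≤ (1 - t) * g) :
    MonotoneOn (profit q C t g s) (Iic ((q - C) / 2)) := by
  intro a (ha : a ≤ (q - C) / 2) b (hb : b ≤ (q - C) / 2) hab
  rw [← sub_nonneg, profit_sub_profit]
  exact mul_nonneg hm (mul_nonneg (by linarith) (by linarith))

theorem antitoneOn_profit (hm : 0 ≤ (1 - t) * g) :
    AntitoneOn (profit q C t g s) (Ici ((q - C) / 2)) := by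
  intro a (ha : (q - C) / 2 ≤ a) b (hb : (q - C) / 2 ≤ b) hab
  rw [← sub_nonpos, profit_sub_profit]
  exact mul_nonpos_of_nonneg_of_nonpos hm
    (mul_nonpos_of_nonneg_of_nonpos (by linarith) (by linarith))

theorem feasiblePrices_eq_Icc (hm : 0 < (1 - t) * g) :
    feasiblePrices q t g s = Icc (max 0 (q - s / ((1 - t) * g))) q := by
  ext a
  have hstock : (1 - t) * g * (q - a) ≤ s ↔ q - s / ((1 - t) * g) ≤ a := by
    rw [sub_le_comm, le_div_iff₀' hm]
  simp only [feasiblePrices, mem_ofPred_eq, mem_Icc, max_le_iff, hstock]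
  exact and_right_comm

theorem optimalPrice_eq_max (hm : 0 < (1 - t) * g) :
    optimalPrice q C t g s = max (max 0 (q - s / ((1 - t) * g))) ((q - C) / 2) := by
  have hcase : s ≤ (1 - t) * g * min q ((q + C) / 2) ↔
      max 0 ((q - C) / 2) ≤ q - s / ((1 - t) * g) := by
    have hvertex : q - (q - C) / 2 = (q + C) / 2 := by ring
    rw [← div_le_iff₀' hm, le_min_iff, max_le_iff, sub_nonneg, le_sub_comm, hvertex]
  have hhalf : max 0 (q - C) / 2 = max 0 ((q - C) / 2) := by
    rw [← max_div_div_right zero_le_two, zero_div]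
  rw [max_right_comm, max_def (max 0 ((q - C) / 2)), optimalPrice, hhalf]
  simp only [hcase]

theorem optimalPrice_mem_feasiblePrices (hq : 0 ≤ q) (hC : -q ≤ C) (hm : 0 < (1 - t) * g)
    (hs : 0 ≤ s) : optimalPrice q C t g s ∈ feasiblePrices q t g s := by
  rw [feasiblePrices_eq_Icc hm, optimalPrice_eq_max hm]
  have hstock : q - s / ((1 - t) * g) ≤ q := sub_le_self q (div_nonneg hs hm.le)
  have hvertex : (q - C) / 2 ≤ q := by linarith
  exact ⟨le_max_left _ _, max_le (max_le hq hstock) hvertex⟩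

theorem isMaxOn_profit_optimalPrice (hm : 0 < (1 - t) * g) :
    IsMaxOn (profit q C t g s) (feasiblePrices q t g s) (optimalPrice q C t g s) := by
  rw [feasiblePrices_eq_Icc hm, optimalPrice_eq_max hm]
  exact (isMaxOn_Ici_max_of_monotoneOn_of_antitoneOn (monotoneOn_profit hm.le)
    (antitoneOn_profit hm.le) _).on_subset Icc_subset_Ici_self

end LinearPricing

open LinearPricing in
/-- A negative `C` is a salvage value `-C` per unsold unit; it may be as large as the choke price
`q`. -/
theorem deterministic_linear_pricing_optimal_general
    {K : Type*} [Field K] [LinearOrder K] [IsStrictOrderedRing K] {q C t g s : K}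
    (hq : 0 ≤ q) (hC : -q ≤ C) (hm : 0 < (1 - t) * g) (hs : 0 ≤ s) :
    optimalPrice q C t g s ∈ feasiblePrices q t g s ∧
      ∀ a ∈ feasiblePrices q t g s,
        profit q C t g s a ≤ profit q C t g s (optimalPrice q C t g s) :=
  ⟨optimalPrice_mem_feasiblePrices hq hC hm hs, isMaxOn_iff.1 (isMaxOn_profit_optimalPrice hm)⟩

/-- Deterministic pricing problem with linear demand `q(a) = q1 - a` on
`A = [0, q1]`: the pricing function `a^D(t,s,g)` maximizes the profit
`J(a) = (1-t)(a+C)(q1-a)g - C·s` over the feasible set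
`F = {a ∈ [0,q1] : (1-t)·g·(q1-a) ≤ s}`. -/
theorem deterministic_linear_pricing_optimal
    (q1 C g t s : ℝ) (hq1 : 0 < q1) (hC : 0 < C) (hg : 0 < g)
    (ht0 : 0 ≤ t) (ht1 : t < 1) (hs : 0 ≤ s)
    (F : Set ℝ) (hF : F = {a | a ∈ Set.Icc 0 q1 ∧ (1 - t) * g * (q1 - a) ≤ s})
    (J : ℝ → ℝ) (hJ : J = fun a => (1 - t) * (a + C) * (q1 - a) * g - C * s)
    (aD : ℝ)
    (haD : aD = if s ≤ (1 - t) * g * min q1 ((q1 + C) / 2)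
      then q1 - s / ((1 - t) * g) else max 0 (q1 - C) / 2) :
    aD ∈ F ∧ ∀ a ∈ F, J a ≤ J aD := by
  subst hF hJ haD
  exact deterministic_linear_pricing_optimal_general hq1.le (by linarith)
    (mul_pos (sub_pos.2 ht1) hg) hs
end

section
/- Let q1 > 0, C > 0, g > 0, 0 ≤ t < 1, and s ≥ 0. With the feasible set F = { a ∈ [0, q1] : (1 − t)·g·(q1 − a) ≤ s } and objective J(a) = (1 − t)(a + C)(q1 − a)g − C·s, the maximum value of J over F equals v^D(t,s,g), where v^D(t,s,g) = q1·s − s²/((1 − t)g) if 0 ≤ s ≤ (1 − t)·g·min(q1, (q1 + C)/2), and v^D(t,s,g) = −C·s + V(C)·(1 − t)·g otherwise, with V(C) = ((q1 + C)/2)² if C < q1 and V(C) = q1·C if C ≥ q1. -/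
/-!
In terms of the demand `x = q₁ - a` in place of the price `a`, the profit is the increasing affine
image `(1 - t) g · r - C s` of the parabola `r = x (q₁ + C - x)`, and feasibility says that `x` lies
in `[0, min q₁ (s / ((1 - t) g))]`. A parabola `x (b - x)` attains its maximum over `[0, M]` at
`min M (b / 2)`. The first branch of the value function is the case in which the stock is the
smallest of the three bounds on `x`; in the second branch the stock constraint is slack.
-/

lemma mul_sub_le_mul_sub_of_add_le {R : Type*} [CommRing R] [PartialOrder R] [IsOrderedRing R]
    {b x y : R} (hxy : x ≤ y) (hb : x + y ≤ b) : x * (b - x) ≤ y * (b - y) := by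
  have factored : y * (b - y) - x * (b - x) = (y - x) * (b - (x + y)) := by ring
  rw [← sub_nonneg, factored]
  exact mul_nonneg (sub_nonneg.2 hxy) (sub_nonneg.2 hb)

variable {𝕜 : Type*} [Field 𝕜]

section Parabola

variable [LinearOrder 𝕜] [IsStrictOrderedRing 𝕜]

lemma mul_sub_le_half_mul_sub_half (b x : 𝕜) : x * (b - x) ≤ b / 2 * (b - b / 2) := by
  have completed_square : b / 2 * (b - b / 2) - x * (b - x) = (x - b / 2) ^ 2 := by ring
  rw [← sub_nonneg, completed_square]
  exact sq_nonneg _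

variable {b M x : 𝕜}

lemma mul_sub_le_min_mul_sub_min (hx : x ≤ M) :
    x * (b - x) ≤ min M (b / 2) * (b - min M (b / 2)) := by
  rcases le_total M (b / 2) with hM | hM
  · rw [min_eq_left hM]
    exact mul_sub_le_mul_sub_of_add_le hx (by linarith)
  · rw [min_eq_right hM]
    exact mul_sub_le_half_mul_sub_half b x

lemma isGreatest_image_mul_sub_Icc (hM : 0 ≤ M) (hb : 0 ≤ b) :
    IsGreatest ((fun x ↦ x * (b - x)) '' Set.Icc 0 M) (min M (b / 2) * (b - min M (b / 2))) := by
  refine ⟨⟨min M (b / 2), ⟨le_min hM (by positivity), min_le_left _ _⟩, rfl⟩, ?_⟩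
  rintro _ ⟨x, ⟨-, hx⟩, rfl⟩
  exact mul_sub_le_min_mul_sub_min hx

end Parabola

namespace LinearDemand

/-- The objective `J`: revenue `(1 - t) * a * (q₁ - a) * g` minus the cost `C` of each unit of the
unsold stock `s - (1 - t) * (q₁ - a) * g`. A negative `C` is a salvage value. -/
def profit (q₁ C g t s a : 𝕜) : 𝕜 :=
  (1 - t) * (a + C) * (q₁ - a) * g - C * s

lemma profit_sub (q₁ C g t s x : 𝕜) :
    profit q₁ C g t s (q₁ - x) = (1 - t) * g * (x * (q₁ + C - x)) - C * s := by
  rw [profit]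
  ring

variable [LinearOrder 𝕜]

/-- The feasible set `F`: prices in `A = [0, q₁]` at which the sales over the remaining time `1 - t`
do not exceed the stock `s`. -/
def feasiblePrices (q₁ g t s : 𝕜) : Set 𝕜 :=
  {a | a ∈ Set.Icc 0 q₁ ∧ (1 - t) * g * (q₁ - a) ≤ s}

/-- The constant `V(C)`: the maximum of `(a + C) * (q₁ - a)` over all prices `a ∈ [0, q₁]`,
regardless of the stock. -/
def unconstrainedValue (q₁ C : 𝕜) : 𝕜 :=
  if C < q₁ then ((q₁ + C) / 2) ^ 2 else q₁ * C

/-- The deterministic value function `v^D(t, s, g)` for linear demand. -/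
def deterministicValue (q₁ C g t s : 𝕜) : 𝕜 :=
  if s ≤ (1 - t) * g * min q₁ ((q₁ + C) / 2) then q₁ * s - s ^ 2 / ((1 - t) * g)
  else -C * s + unconstrainedValue q₁ C * (1 - t) * g

/-- The feasible price of maximal profit. Its demand is the smallest of the market size `q₁`, the
demand `s / ((1 - t) * g)` that sells the stock exactly, and the demand `(q₁ + C) / 2` at which the
profit peaks on the whole line. -/
def optimalPrice (q₁ C g t s : 𝕜) : 𝕜 :=
  q₁ - min (min q₁ (s / ((1 - t) * g))) ((q₁ + C) / 2)

variable [IsStrictOrderedRing 𝕜] {q₁ C g t s : 𝕜}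

lemma feasiblePrices_eq_image_Icc (hk : 0 < (1 - t) * g) :
    feasiblePrices q₁ g t s = (fun x ↦ q₁ - x) '' Set.Icc 0 (min q₁ (s / ((1 - t) * g))) := by
  rw [Set.image_const_sub_Icc]
  ext a
  have stock_iff : (1 - t) * g * (q₁ - a) ≤ s ↔ q₁ - a ≤ s / ((1 - t) * g) :=
    (le_div_iff₀' hk).symm
  have price_iff : 0 ≤ a ↔ q₁ - a ≤ q₁ := (sub_le_self_iff q₁).symm
  simp only [feasiblePrices, Set.mem_ofPred_eq, Set.mem_Icc, stock_iff, price_iff, sub_zero,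
    sub_le_comm (a := q₁) (c := a), le_min_iff]
  tauto

lemma isGreatest_image_profit_feasiblePrices (hq : 0 ≤ q₁) (hqC : 0 ≤ q₁ + C)
    (hk : 0 < (1 - t) * g) (hs : 0 ≤ s) :
    IsGreatest (profit q₁ C g t s '' feasiblePrices q₁ g t s)
      (profit q₁ C g t s (optimalPrice q₁ C g t s)) := by
  have affine_mono : Monotone fun r ↦ (1 - t) * g * r - C * s := fun _ _ h ↦
    sub_le_sub_right (mul_le_mul_of_nonneg_left h hk.le) _
  have parabola_max := isGreatest_image_mul_sub_Icc (le_min hq (div_nonneg hs hk.le)) hqC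
  simpa only [feasiblePrices_eq_image_Icc hk, Set.image_image, optimalPrice, profit_sub] using
    affine_mono.map_isGreatest parabola_max

lemma unconstrainedValue_eq (q₁ C : 𝕜) :
    unconstrainedValue q₁ C = min q₁ ((q₁ + C) / 2) * (q₁ + C - min q₁ ((q₁ + C) / 2)) := by
  rw [unconstrainedValue]
  split_ifs with hC
  · rw [min_eq_right (by linarith)]
    ring
  · rw [min_eq_left (by linarith)]
    ring

lemma deterministicValue_eq_profit (hk : 0 < (1 - t) * g) :
    deterministicValue q₁ C g t s = profit q₁ C g t s (optimalPrice q₁ C g t s) := by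
  rw [optimalPrice, profit_sub, min_right_comm, deterministicValue]
  split_ifs with hsmall
  · rw [min_eq_right ((div_le_iff₀' hk).2 hsmall)]
    have hk_ne := hk.ne'
    generalize (1 - t) * g = k at hk_ne ⊢
    field_simp
    ring
  · rw [min_eq_left ((le_div_iff₀' hk).2 (not_le.1 hsmall).le), unconstrainedValue_eq]
    ring

end LinearDemand

open LinearDemand in
theorem deterministic_linear_value_function_general
    [LinearOrder 𝕜] [IsStrictOrderedRing 𝕜] {q₁ C g t s : 𝕜}
    (hq : 0 ≤ q₁) (hqC : 0 ≤ q₁ + C) (hg : 0 < g) (ht : t < 1) (hs : 0 ≤ s) :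
    IsGreatest (profit q₁ C g t s '' feasiblePrices q₁ g t s)
      (deterministicValue q₁ C g t s) := by
  have hk : 0 < (1 - t) * g := mul_pos (sub_pos.2 ht) hg
  rw [deterministicValue_eq_profit hk]
  exact isGreatest_image_profit_feasiblePrices hq hqC hk hs

/-- Deterministic pricing problem with linear demand `q(a) = q1 - a` on
`A = [0, q1]`: the maximum of `J(a) = (1-t)(a+C)(q1-a)g - C·s` over the
feasible set `F = {a ∈ [0,q1] : (1-t)·g·(q1-a) ≤ s}` equals the
deterministic value function `v^D(t,s,g)`. -/
theorem deterministic_linear_value_function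
    (q1 C g t s : ℝ) (hq1 : 0 < q1) (hC : 0 < C) (hg : 0 < g)
    (ht0 : 0 ≤ t) (ht1 : t < 1) (hs : 0 ≤ s)
    (F : Set ℝ) (hF : F = {a | a ∈ Set.Icc 0 q1 ∧ (1 - t) * g * (q1 - a) ≤ s})
    (J : ℝ → ℝ) (hJ : J = fun a => (1 - t) * (a + C) * (q1 - a) * g - C * s)
    (V : ℝ) (hV : V = if C < q1 then ((q1 + C) / 2) ^ 2 else q1 * C)
    (vD : ℝ)
    (hvD : vD = if s ≤ (1 - t) * g * min q1 ((q1 + C) / 2)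
      then q1 * s - s ^ 2 / ((1 - t) * g) else -C * s + V * (1 - t) * g) :
    IsGreatest (J '' F) vD := by
  subst hF hJ hV hvD
  exact deterministic_linear_value_function_general hq1.le (add_pos hq1 hC).le hg ht1 hs
end

section
/- Let q1 > 0 and define v : ℝ³ → ℝ by v(t,s,g) = q1·s − s²/((1 − t)·g). Then for all (t,s,g) with 0 < t < 1, s > 0, and g > 0, the partial derivatives of v satisfy the deterministic Hamilton–Jacobi–Bellman equation for linear demand: ∂v/∂t (t,s,g) + (g/4)·(q1 − ∂v/∂s (t,s,g))² = 0. -/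
/-!
To sell the stock `s` at a constant rate over the remaining time `T - t` in a market of size `g`,
one needs the demand `x = s / ((T - t) * g)` per unit of market size. Under `q(a) = q₁ - a` this is
the demand at price `q₁ - x`, so the revenue is `v = (q₁ - x) * s`. In terms of `x` the partial
derivatives are `v_t = -g * x ^ 2` and `v_s = q₁ - 2 * x`, and the two terms of the HJB equation
cancel.
-/

section SellOut

variable {𝕜 : Type*}

/-- The demand per unit of market size `g` that sells the stock `s` at a constant rate between
time `t` and the horizon `T`. -/
def sellOutRate [Field 𝕜] (T t s g : 𝕜) : 𝕜 :=
  s / ((T - t) * g)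

/-- The revenue from selling the stock `s` between time `t` and the horizon `T` at the constant
price that just sells it out under the linear demand `q(a) = q₁ - a`: this price times the
stock. -/
def sellOutValue [Field 𝕜] (q₁ T t s g : 𝕜) : 𝕜 :=
  (q₁ - sellOutRate T t s g) * s

theorem sellOutValue_eq_sub_sq_div [Field 𝕜] (q₁ T t s g : 𝕜) :
    sellOutValue q₁ T t s g = q₁ * s - s ^ 2 / ((T - t) * g) := by
  rw [sellOutValue, sellOutRate]
  ring

theorem mul_sellOutRate [Field 𝕜] {T t g : 𝕜} (ht : t ≠ T) (hg : g ≠ 0) (s : 𝕜) :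
    (T - t) * g * sellOutRate T t s g = s :=
  mul_div_cancel₀ s (mul_ne_zero (sub_ne_zero.mpr ht.symm) hg)

variable [NontriviallyNormedField 𝕜] {T t : 𝕜}

theorem hasDerivAt_sellOutRate_time (ht : t ≠ T) (s g : 𝕜) :
    HasDerivAt (fun t' ↦ sellOutRate T t' s g) (sellOutRate T t s g / (T - t)) t := by
  have h_rate (t' : 𝕜) : sellOutRate T t' s g = s / g * (T - t')⁻¹ := by
    rw [sellOutRate, div_mul_eq_div_div_swap, div_eq_mul_inv]
  simp only [h_rate]
  have h_inv := ((hasDerivAt_id' t).const_sub T).fun_inv (sub_ne_zero.mpr ht.symm)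
  refine (h_inv.const_mul (s / g)).congr_deriv ?_
  field

theorem hasDerivAt_sellOutRate_stock (T t s g : 𝕜) :
    HasDerivAt (fun s' ↦ sellOutRate T t s' g) (1 / ((T - t) * g)) s :=
  (hasDerivAt_id s).div_const _

theorem hasDerivAt_sellOutValue_time (q₁ : 𝕜) (ht : t ≠ T) (s : 𝕜) {g : 𝕜} (hg : g ≠ 0) :
    HasDerivAt (fun t' ↦ sellOutValue q₁ T t' s g) (-(g * sellOutRate T t s g ^ 2)) t := by
  have hTt : T - t ≠ 0 := sub_ne_zero.mpr ht.symm
  refine (((hasDerivAt_sellOutRate_time ht s g).const_sub q₁).mul_const s).congr_deriv ?_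
  set x := sellOutRate T t s g with hx
  calc -(x / (T - t)) * s = -(x / (T - t)) * ((T - t) * g * x) := by
        rw [hx, mul_sellOutRate ht hg]
    _ = -(g * x ^ 2) := by field

theorem hasDerivAt_sellOutValue_stock (q₁ T t s g : 𝕜) :
    HasDerivAt (fun s' ↦ sellOutValue q₁ T t s' g) (q₁ - 2 * sellOutRate T t s g) s := by
  refine (((hasDerivAt_sellOutRate_stock T t s g).const_sub q₁).fun_mul
    (hasDerivAt_id' s)).congr_deriv ?_
  rw [sellOutRate]
  ring

theorem deterministic_linear_hjb_sellout_region_general [NeZero (2 : 𝕜)]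
    (q₁ : 𝕜) (ht : t ≠ T) (s : 𝕜) {g : 𝕜} (hg : g ≠ 0) :
    deriv (fun t' ↦ sellOutValue q₁ T t' s g) t
      + g / 4 * (q₁ - deriv (fun s' ↦ sellOutValue q₁ T t s' g) s) ^ 2 = 0 := by
  rw [(hasDerivAt_sellOutValue_time q₁ ht s hg).deriv,
    (hasDerivAt_sellOutValue_stock q₁ T t s g).deriv, sub_sub_cancel]
  have h_four : (4 : 𝕜) = 2 ^ 2 := by norm_num
  rw [h_four]
  field

end SellOut

/-- The function `v(t,s,g) = q1·s - s²/((1-t)·g)` satisfies the deterministic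
HJB equation for linear demand, `v_t + (g/4)(q1 - v_s)² = 0`, for
`0 < t < 1`, `s > 0`, `g > 0`. -/
theorem deterministic_linear_hjb_sellout_region
    (q1 : ℝ) (hq1 : 0 < q1)
    (v : ℝ → ℝ → ℝ → ℝ)
    (hv : ∀ t s g, v t s g = q1 * s - s ^ 2 / ((1 - t) * g)) :
    ∀ t s g : ℝ, 0 < t → t < 1 → 0 < s → 0 < g →
      deriv (fun t' => v t' s g) t
        + g / 4 * (q1 - deriv (fun s' => v t s' g) s) ^ 2 = 0 := by
  simp only [hv, ← sellOutValue_eq_sub_sq_div]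
  exact fun t s g _ ht _ hg ↦ deterministic_linear_hjb_sellout_region_general q1 ht.ne s hg.ne'
end

section
/- Let q1 > 0 and define v(t,s,g) = s·log( q1·g·(1 − t)/s ). Then for all (t,s,g) with 0 < t < 1, s > 0, and g > 0, v satisfies the deterministic Hamilton–Jacobi–Bellman equation for exponential demand: ∂v/∂t (t,s,g) + g·q1·exp( −1 − ∂v/∂s (t,s,g) ) = 0. -/
/-!
With remaining potential demand `D t`, the constant price `p = log (D t / s)` solves
`D t * exp (-p) = s`, so it sells the stock `s` out exactly at the horizon and earns
`v = s * p`. Since `v_s = p - 1`, the HJB nonlinearity `exp (-1 - v_s) = exp (-p)` is the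
ratio `s / D t`, and `v_t = s * D' t / D t` cancels it against the demand rate `-D' t`.
-/

theorem hasDerivAt_log_div_const {f : ℝ → ℝ} {f' x c : ℝ} (hf : HasDerivAt f f' x)
    (hx : f x ≠ 0) (hc : c ≠ 0) :
    HasDerivAt (fun y => Real.log (f y / c)) (f' / f x) x := by
  simpa only [div_div_div_cancel_right₀ hc] using (hf.div_const c).log (div_ne_zero hx hc)

theorem hasDerivAt_log_const_div {c x : ℝ} (hc : c ≠ 0) (hx : x ≠ 0) :
    HasDerivAt (fun y => Real.log (c / y)) (-x⁻¹) x := by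
  have h := ((hasDerivAt_inv hx).const_mul c).log (mul_ne_zero hc (inv_ne_zero hx))
  refine h.congr_deriv ?_
  field_simp

theorem hasDerivAt_mul_log_const_div {c x : ℝ} (hc : c ≠ 0) (hx : x ≠ 0) :
    HasDerivAt (fun y => y * Real.log (c / y)) (Real.log (c / x) - 1) x := by
  refine ((hasDerivAt_id' x).mul (hasDerivAt_log_const_div hc hx)).congr_deriv ?_
  rw [one_mul, mul_neg, mul_inv_cancel₀ hx, sub_eq_add_neg]

theorem hasDerivAt_const_mul_const_sub (a b x : ℝ) :
    HasDerivAt (fun y => a * (b - y)) (-a) x := by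
  simpa only [mul_neg_one] using ((hasDerivAt_id' x).const_sub b).const_mul a

theorem deterministic_exponential_hjb_sellout_region_general
    {D : ℝ → ℝ} {r t s : ℝ} (hD : HasDerivAt D (-r) t) (hpos : 0 < D t / s) :
    deriv (fun t' => s * Real.log (D t' / s)) t
      + r * Real.exp (-1 - deriv (fun s' => s' * Real.log (D t / s')) s) = 0 := by
  obtain ⟨hDt, hs⟩ := div_ne_zero_iff.mp hpos.ne'
  have v_t : deriv (fun t' => s * Real.log (D t' / s)) t = s * (-r / D t) :=
    ((hasDerivAt_log_div_const hD hDt hs).const_mul s).deriv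
  have v_s : deriv (fun s' => s' * Real.log (D t / s')) s = Real.log (D t / s) - 1 :=
    (hasDerivAt_mul_log_const_div hDt hs).deriv
  have exp_eq_ratio : Real.exp (-1 - (Real.log (D t / s) - 1)) = s / D t := by
    rw [show -1 - (Real.log (D t / s) - 1) = -Real.log (D t / s) by ring,
      Real.exp_neg, Real.exp_log hpos, inv_div]
  rw [v_t, v_s, exp_eq_ratio]
  ring

/-- The function `v(t,s,g) = s·log(q1·g·(1-t)/s)` satisfies the deterministic
HJB equation for exponential demand, `v_t + g·q1·exp(-1 - v_s) = 0`, for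
`0 < t < 1`, `s > 0`, `g > 0`. -/
theorem deterministic_exponential_hjb_sellout_region
    (q1 : ℝ) (hq1 : 0 < q1)
    (v : ℝ → ℝ → ℝ → ℝ)
    (hv : ∀ t s g, v t s g = s * Real.log (q1 * g * (1 - t) / s)) :
    ∀ t s g : ℝ, 0 < t → t < 1 → 0 < s → 0 < g →
      deriv (fun t' => v t' s g) t
        + g * q1 * Real.exp (-1 - deriv (fun s' => v t s' g) s) = 0 := by
  intro t s g _ ht hs hg
  have hpos : 0 < q1 * g * (1 - t) / s := div_pos (mul_pos (mul_pos hq1 hg) (sub_pos.mpr ht)) hs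
  simpa only [hv, mul_comm g q1] using deterministic_exponential_hjb_sellout_region_general
    (hasDerivAt_const_mul_const_sub (q1 * g) 1 t) hpos
end

section
/- Let β > 0 and let f : ℝ → ℝ be twice continuously differentiable and satisfy the ODE β²·f''(η) + (3η + 2f(η))·f'(η) − f(η) = 0 for all η ∈ ℝ. Define u(τ,x) = τ^{1/2}·f( x/τ^{3/2} ) for τ > 0 and x ∈ ℝ. Then u satisfies the leading-order inner-layer PDE u_τ(τ,x) = (1/2)·(β·τ)²·u_xx(τ,x) + u(τ,x)·u_x(τ,x) for all τ > 0 and x ∈ ℝ. -/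
/-!
If `u = τ ^ a * f (x / τ ^ (a + 1))`, then `u_τ`, `τ ^ (2 * a + 1) * u_xx` and `u * u_x` all scale
as `τ ^ (a - 1)`. This common power factors out of the equation
`u_τ = c * τ ^ (2 * a + 1) * u_xx + u * u_x` and leaves an ordinary differential equation for `f`
in `η = x / τ ^ (a + 1)`; the inner layer is the case `a = 1 / 2`, `c = β ^ 2 / 2`.
-/

open Filter Topology

/-- The self-similar function of time `τ` and position `x` with profile `f`, amplitude exponent `a`
and length exponent `b`. The powers are real powers, so only `0 < τ` is meaningful. -/
noncomputable def selfSimilar (a b : ℝ) (f : ℝ → ℝ) (τ x : ℝ) : ℝ :=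
  τ ^ a * f (x / τ ^ b)

section Derivatives

variable {a b τ x : ℝ} {f : ℝ → ℝ}

theorem hasDerivAt_selfSimilar_space {f' : ℝ} (hτ : 0 < τ) (hf : HasDerivAt f f' (x / τ ^ b)) :
    HasDerivAt (selfSimilar a b f τ) (τ ^ (a - b) * f') x := by
  have hη : HasDerivAt (fun y ↦ y / τ ^ b) (1 / τ ^ b) x := (hasDerivAt_id x).div_const _
  refine ((hf.comp x hη).const_mul (τ ^ a)).congr_deriv ?_
  rw [Real.rpow_sub hτ]
  ring

theorem deriv_deriv_selfSimilar_space {f' : ℝ → ℝ} {f'' : ℝ} (hτ : 0 < τ)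
    (hf : ∀ᶠ η in 𝓝 (x / τ ^ b), HasDerivAt f (f' η) η) (hf' : HasDerivAt f' f'' (x / τ ^ b)) :
    deriv (deriv (selfSimilar a b f τ)) x = τ ^ (a - b - b) * f'' := by
  have hη : Tendsto (fun y ↦ y / τ ^ b) (𝓝 x) (𝓝 (x / τ ^ b)) := tendsto_id.div_const _
  have hux : deriv (selfSimilar a b f τ) =ᶠ[𝓝 x] selfSimilar (a - b) b f' τ :=
    (hη.eventually hf).mono fun y hy ↦ (hasDerivAt_selfSimilar_space hτ hy).deriv
  rw [hux.deriv_eq, (hasDerivAt_selfSimilar_space hτ hf').deriv]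

theorem hasDerivAt_div_rpow (hτ : 0 < τ) :
    HasDerivAt (fun t ↦ x / t ^ b) (-b * (x / τ ^ b) / τ) τ := by
  have hpow : HasDerivAt (fun t ↦ t ^ b) (b * τ ^ (b - 1)) τ :=
    Real.hasDerivAt_rpow_const (.inl hτ.ne')
  have hb : τ ^ b ≠ 0 := (Real.rpow_pos_of_pos hτ b).ne'
  refine ((hasDerivAt_const τ x).fun_div hpow hb).congr_deriv ?_
  rw [Real.rpow_sub_one hτ.ne']
  field_simp
  ring

theorem hasDerivAt_selfSimilar_time {f' : ℝ} (hτ : 0 < τ) (hf : HasDerivAt f f' (x / τ ^ b)) :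
    HasDerivAt (fun t ↦ selfSimilar a b f t x)
      (τ ^ (a - 1) * (a * f (x / τ ^ b) - b * (x / τ ^ b) * f')) τ := by
  have hpow : HasDerivAt (fun t ↦ t ^ a) (a * τ ^ (a - 1)) τ :=
    Real.hasDerivAt_rpow_const (.inl hτ.ne')
  refine (hpow.mul (hf.comp τ (hasDerivAt_div_rpow hτ))).congr_deriv ?_
  rw [Real.rpow_sub_one hτ.ne', Function.comp_apply]
  ring

end Derivatives

theorem burgers_residual_selfSimilar {a c τ x : ℝ} {f f' : ℝ → ℝ} {f'' : ℝ} (hτ : 0 < τ)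
    (hf : ∀ᶠ η in 𝓝 (x / τ ^ (a + 1)), HasDerivAt f (f' η) η)
    (hf' : HasDerivAt f' f'' (x / τ ^ (a + 1))) :
    let u := selfSimilar a (a + 1) f
    let η := x / τ ^ (a + 1)
    c * τ ^ (2 * a + 1) * deriv (deriv (u τ)) x + u τ x * deriv (u τ) x - deriv (fun t ↦ u t x) τ =
      τ ^ (a - 1) * (c * f'' + ((a + 1) * η + f η) * f' η - a * f η) := by
  intro u η
  have hfη : HasDerivAt f (f' η) η := hf.self_of_nhds
  have hdiffusion : τ ^ (2 * a + 1) * τ ^ (a - (a + 1) - (a + 1)) = τ ^ (a - 1) := by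
    rw [← Real.rpow_add hτ]
    ring_nf
  have hadvection : τ ^ a * τ ^ (a - (a + 1)) = τ ^ (a - 1) := by
    rw [← Real.rpow_add hτ]
    ring_nf
  have hu : u τ x = τ ^ a * f η := rfl
  rw [deriv_deriv_selfSimilar_space hτ hf hf', (hasDerivAt_selfSimilar_space hτ hfη).deriv,
    (hasDerivAt_selfSimilar_time hτ hfη).deriv, hu]
  linear_combination c * f'' * hdiffusion + f η * f' η * hadvection

theorem inner_layer_similarity_solution_general {β τ x : ℝ} {f f' : ℝ → ℝ} {f'' : ℝ} (hτ : 0 < τ)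
    (hf : ∀ᶠ η in 𝓝 (x / τ ^ (3 / 2 : ℝ)), HasDerivAt f (f' η) η)
    (hf' : HasDerivAt f' f'' (x / τ ^ (3 / 2 : ℝ))) :
    let u := selfSimilar (1 / 2) (3 / 2) f
    let η := x / τ ^ (3 / 2 : ℝ)
    deriv (fun t ↦ u t x) τ =
        1 / 2 * (β * τ) ^ 2 * deriv (deriv (u τ)) x + u τ x * deriv (u τ) x ↔
      β ^ 2 * f'' + (3 * η + 2 * f η) * f' η - f η = 0 := by
  intro u η
  have hlength : (1 / 2 + 1 : ℝ) = 3 / 2 := by norm_num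
  have hdiffusivity : τ ^ (2 * (1 / 2) + 1 : ℝ) = τ ^ 2 := by
    rw [← Real.rpow_natCast]
    norm_num
  have hburgers := burgers_residual_selfSimilar (a := 1 / 2) (c := β ^ 2 / 2) hτ
    (by rwa [hlength]) (by rwa [hlength])
  rw [hlength, hdiffusivity] at hburgers
  have hresidual :
      1 / 2 * (β * τ) ^ 2 * deriv (deriv (u τ)) x + u τ x * deriv (u τ) x
          - deriv (fun t ↦ u t x) τ =
        τ ^ (1 / 2 - 1 : ℝ) / 2 * (β ^ 2 * f'' + (3 * η + 2 * f η) * f' η - f η) := by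
    linear_combination hburgers
  have hscale : τ ^ (1 / 2 - 1 : ℝ) / 2 ≠ 0 := (half_pos (Real.rpow_pos_of_pos hτ _)).ne'
  rw [eq_comm, ← sub_eq_zero, hresidual, mul_eq_zero, or_iff_right hscale]

/-- If `f` is `C²` and solves the similarity ODE
`β²f'' + (3η + 2f)f' - f = 0`, then `u(τ,x) = τ^{1/2}·f(x/τ^{3/2})` solves
the leading-order inner-layer PDE `u_τ = (1/2)(βτ)²u_xx + u·u_x` for all
`τ > 0` and `x ∈ ℝ`. -/
theorem inner_layer_similarity_solution
    (β : ℝ) (hβ : 0 < β)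
    (f : ℝ → ℝ) (hf : ContDiff ℝ 2 f)
    (hode : ∀ η : ℝ,
      β ^ 2 * deriv (deriv f) η + (3 * η + 2 * f η) * deriv f η - f η = 0)
    (u : ℝ → ℝ → ℝ)
    (hu : ∀ τ x, u τ x = τ ^ ((1 : ℝ) / 2) * f (x / τ ^ ((3 : ℝ) / 2))) :
    ∀ τ > (0 : ℝ), ∀ x : ℝ,
      deriv (fun τ' => u τ' x) τ =
        1 / 2 * (β * τ) ^ 2 * deriv (fun x' => deriv (fun x'' => u τ x'') x') x
          + u τ x * deriv (fun x' => u τ x') x := by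
  have hf' (η : ℝ) : HasDerivAt f (deriv f η) η := (hf.differentiable two_ne_zero η).hasDerivAt
  have hf'' (η : ℝ) : HasDerivAt (deriv f) (deriv (deriv f) η) η :=
    (hf.differentiable_deriv_two η).hasDerivAt
  obtain rfl : u = selfSimilar (1 / 2) (3 / 2) f := funext₂ hu
  exact fun τ hτ x ↦
    (inner_layer_similarity_solution_general hτ (.of_forall hf') (hf'' _)).2 (hode _)
end

section
/- Let q1 > 0 and σ ∈ ℝ, and define φ(τ,ξ) = q1·ξ − ξ²/τ − σ²·ξ²/2 for τ > 0 and ξ > 0. Then the residual of φ in the transformed HJB equation satisfies, for all τ > 0 and ξ > 0, φ_τ(τ,ξ) − (σ²/2)·ξ²·φ_ξξ(τ,ξ) − (1/4)·(q1 − φ_ξ(τ,ξ))² = σ⁴·ξ²/4. In particular, in the outer region ξ < βτ, the deterministic value function φ⁰(τ,ξ) = q1ξ − ξ²/τ corrected by the second-order term φ²(τ,ξ) = −ξ²/2 satisfies the transformed HJB equation up to a remainder of order O(σ⁴). -/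
/-!
On functions `q ξ - a(τ) ξ²` the partial derivative `φ_ξ = q - 2 a ξ` makes the nonlinear term of
the transformed HJB equation equal to `a² ξ²`, so every term is a multiple of `ξ²` and the equation
reduces to the Riccati equation `a' = σ² a - a²`. The outer expansion is the case
`a = 1/τ + σ²/2`. Its leading part `1/τ` solves `a' = -a²`, the constant `σ²/2` is chosen so that
the terms in `σ²/τ` cancel, and the defect `σ⁴/2 - σ⁴/4` is what remains.
-/

section

variable {𝕜 : Type*} [NontriviallyNormedField 𝕜]

/-- The residual `φ_τ - (σ²/2) ξ² φ_ξξ - (1/4) (q - φ_ξ)²` of `φ` in the transformed HJB equation,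
used to measure how far an approximation is from solving it. The time `τ` is the first argument
of `φ`. -/
noncomputable def hjbResidual (q σ : 𝕜) (φ : 𝕜 → 𝕜 → 𝕜) (τ ξ : 𝕜) : 𝕜 :=
  deriv (fun τ' => φ τ' ξ) τ - σ ^ 2 / 2 * ξ ^ 2 * deriv (deriv (φ τ)) ξ
    - 1 / 4 * (q - deriv (φ τ) ξ) ^ 2

/-- The outer asymptotic expansion `φ⁰ + σ² φ²` of the value function, truncated at second order
in `σ`, where `φ⁰ = q ξ - ξ²/τ` and `φ² = -ξ²/2`. It is meaningful for `τ ≠ 0` only. -/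
def outerExpansion (q σ τ ξ : 𝕜) : 𝕜 :=
  q * ξ - ξ ^ 2 / τ - σ ^ 2 * ξ ^ 2 / 2

theorem outerExpansion_eq_mul_sub_mul_sq (q σ : 𝕜) :
    outerExpansion q σ = fun τ ξ => q * ξ - (τ⁻¹ + σ ^ 2 / 2) * ξ ^ 2 := by
  ext τ ξ
  rw [outerExpansion]
  ring

theorem deriv_mul_sub_mul_sq (b a : 𝕜) :
    deriv (fun x => b * x - a * x ^ 2) = fun x => b - 2 * a * x := by
  ext x
  have h := ((hasDerivAt_id' x).const_mul b).sub ((hasDerivAt_pow 2 x).const_mul a)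
  refine h.deriv.trans ?_
  push_cast
  ring

theorem deriv_deriv_mul_sub_mul_sq (b a x : 𝕜) :
    deriv (deriv fun x => b * x - a * x ^ 2) x = -(2 * a) := by
  rw [deriv_mul_sub_mul_sq]
  exact (((hasDerivAt_id' x).const_mul (2 * a)).const_sub b).deriv.trans (by rw [mul_one])

variable [NeZero (2 : 𝕜)]

theorem hjbResidual_mul_sub_mul_sq (q σ : 𝕜) {a : 𝕜 → 𝕜} {a' τ : 𝕜} (ha : HasDerivAt a a' τ)
    (ξ : 𝕜) :
    hjbResidual q σ (fun τ ξ => q * ξ - a τ * ξ ^ 2) τ ξ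
      = (-a' + σ ^ 2 * a τ - a τ ^ 2) * ξ ^ 2 := by
  have h_time : deriv (fun τ' => q * ξ - a τ' * ξ ^ 2) τ = -(a' * ξ ^ 2) :=
    ((ha.mul_const (ξ ^ 2)).const_sub (q * ξ)).deriv
  have h_two : (2 : 𝕜) ≠ 0 := two_ne_zero
  have h_four : (4 : 𝕜) = 2 * 2 := by norm_num
  rw [hjbResidual, h_time, deriv_deriv_mul_sub_mul_sq, deriv_mul_sub_mul_sq, h_four]
  field_simp
  ring

theorem outer_expansion_residual_general (q σ : 𝕜) {τ : 𝕜} (hτ : τ ≠ 0) (ξ : 𝕜) :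
    hjbResidual q σ (outerExpansion q σ) τ ξ = σ ^ 4 * ξ ^ 2 / 4 := by
  have h_coeff : HasDerivAt (fun τ => τ⁻¹ + σ ^ 2 / 2) (-(τ ^ 2)⁻¹) τ :=
    (hasDerivAt_inv hτ).add_const _
  have h_riccati : -(-(τ ^ 2)⁻¹) + σ ^ 2 * (τ⁻¹ + σ ^ 2 / 2) - (τ⁻¹ + σ ^ 2 / 2) ^ 2
      = σ ^ 4 / 4 := by
    have h_two : (2 : 𝕜) ≠ 0 := two_ne_zero
    have h_four : (4 : 𝕜) = 2 * 2 := by norm_num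
    rw [h_four]
    field_simp
    ring
  rw [outerExpansion_eq_mul_sub_mul_sq, hjbResidual_mul_sub_mul_sq q σ h_coeff, h_riccati,
    div_mul_eq_mul_div]

end

/-- The outer-expansion correction: `φ(τ,ξ) = q1·ξ - ξ²/τ - σ²ξ²/2` leaves a
residual of exactly `σ⁴ξ²/4` in the transformed HJB equation
`φ_τ = (σ²/2)ξ²φ_ξξ + (1/4)(q1 - φ_ξ)²`, i.e. the deterministic value
function corrected by the second-order term `-σ²ξ²/2` satisfies the
transformed HJB equation up to `O(σ⁴)`. -/
theorem outer_expansion_residual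
    (q1 σ : ℝ) (hq1 : 0 < q1)
    (φ : ℝ → ℝ → ℝ)
    (hφ : ∀ τ ξ, φ τ ξ = q1 * ξ - ξ ^ 2 / τ - σ ^ 2 * ξ ^ 2 / 2) :
    ∀ τ > (0 : ℝ), ∀ ξ > (0 : ℝ),
      deriv (fun τ' => φ τ' ξ) τ
        - σ ^ 2 / 2 * ξ ^ 2 * deriv (fun ξ' => deriv (φ τ) ξ') ξ
        - 1 / 4 * (q1 - deriv (φ τ) ξ) ^ 2
        = σ ^ 4 * ξ ^ 2 / 4 := by
  obtain rfl : φ = outerExpansion q1 σ := funext₂ hφ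
  exact fun τ hτ ξ _ => outer_expansion_residual_general q1 σ hτ.ne' ξ
end
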